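/- arXiv:2603.07945 — 3 statements merged into one kernel-verified Lean document; each statement's English description precedes it below -/
import Mathlib

section
/- Let R be a henselian Gorenstein Noetherian local ring and 𝒳 a resolving subcategory of the category of finitely generated R-modules. Then the class 𝒞(𝒳) is closed under direct summands and under extensions: (i) if M ⊕ N ∈ 𝒞(𝒳) then M ∈ 𝒞(𝒳) and N ∈ 𝒞(𝒳); (ii) if 0 → A → B → C → 0 is a short exact sequence of finitely generated R-modules with A, C ∈ 𝒞(𝒳), then B ∈ 𝒞(𝒳). -/
open CategoryTheory IsLocalRing

universe u

noncomputable section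

/-- The `i`-th Ext module of two `R`-modules. -/
abbrev ExtMod (R : Type u) [CommRing R] (i : ℕ) (M N : ModuleCat.{u} R) : ModuleCat R :=
  ((Ext R (ModuleCat.{u} R) i).obj (Opposite.op M)).obj N

/-- Vanishing of the `i`-th Ext module: `Ext_R^i(M, N) = 0`. -/
def ExtVanish (R : Type u) [CommRing R] (i : ℕ) (M N : ModuleCat.{u} R) : Prop :=
  Subsingleton (ExtMod R i M N)

variable (R : Type u) [CommRing R]

/-- `0 → A → B → C → 0` is a short exact sequence. -/
def IsSES {A B C : ModuleCat.{u} R} (f : A →ₗ[R] B) (g : B →ₗ[R] C) : Prop :=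
  Function.Injective f ∧ Function.Exact f g ∧ Function.Surjective g

/-- A resolving subcategory of the category of finitely generated `R`-modules. -/
structure IsResolving (𝒳 : Set (ModuleCat.{u} R)) : Prop where
  finite : ∀ M ∈ 𝒳, Module.Finite R M
  isoClosed : ∀ {M N : ModuleCat.{u} R}, M ∈ 𝒳 → (↥M ≃ₗ[R] ↥N) → N ∈ 𝒳
  freeMem : ∀ M : ModuleCat.{u} R, Module.Finite R M → Module.Free R M → M ∈ 𝒳
  summandClosed : ∀ M N : ModuleCat.{u} R, ModuleCat.of R (↥M × ↥N) ∈ 𝒳 → M ∈ 𝒳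
  extClosed : ∀ (A B C : ModuleCat.{u} R) (f : A →ₗ[R] B) (g : B →ₗ[R] C),
    IsSES R f g → A ∈ 𝒳 → C ∈ 𝒳 → B ∈ 𝒳
  kerClosed : ∀ (A B C : ModuleCat.{u} R) (f : A →ₗ[R] B) (g : B →ₗ[R] C),
    IsSES R f g → B ∈ 𝒳 → C ∈ 𝒳 → A ∈ 𝒳

/-- `f : X → M` is a right `𝒳`-approximation of `M`. -/
def IsRightApprox (𝒳 : Set (ModuleCat.{u} R)) {X M : ModuleCat.{u} R} (f : X →ₗ[R] M) : Prop :=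
  X ∈ 𝒳 ∧ ∀ W ∈ 𝒳, ∀ g : ↥W →ₗ[R] ↥M, ∃ h : ↥W →ₗ[R] ↥X, f ∘ₗ h = g

/-- `M` admits a right `𝒳`-approximation. -/
def HasRightApprox (𝒳 : Set (ModuleCat.{u} R)) (M : ModuleCat.{u} R) : Prop :=
  ∃ (X : ModuleCat.{u} R) (f : X →ₗ[R] M), IsRightApprox R 𝒳 f

/-- `𝒳` is contravariantly infinite: no finitely generated module outside `𝒳` admits
a right `𝒳`-approximation. -/
def ContravariantlyInfinite (𝒳 : Set (ModuleCat.{u} R)) : Prop :=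
  ∀ M : ModuleCat.{u} R, Module.Finite R M → M ∉ 𝒳 → ¬ HasRightApprox R 𝒳 M

/-- `𝒳` is contravariantly finite: every finitely generated module admits
a right `𝒳`-approximation. -/
def ContravariantlyFinite (𝒳 : Set (ModuleCat.{u} R)) : Prop :=
  ∀ M : ModuleCat.{u} R, Module.Finite R M → HasRightApprox R 𝒳 M

/-- The restricted functor `Hom_R(-, C)|_𝒳` is finitely presented, i.e. `C ∈ 𝒞(𝒳)`. -/
def MemCC (𝒳 : Set (ModuleCat.{u} R)) (C : ModuleCat.{u} R) : Prop :=
  ∃ (X₀ X₁ : ModuleCat.{u} R) (g : ↥X₁ →ₗ[R] ↥X₀) (f : ↥X₀ →ₗ[R] ↥C), X₀ ∈ 𝒳 ∧ X₁ ∈ 𝒳 ∧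
    ∀ W ∈ 𝒳, Function.Surjective (fun h : ↥W →ₗ[R] ↥X₀ => f ∘ₗ h) ∧
      Function.Exact (fun h : ↥W →ₗ[R] ↥X₁ => g ∘ₗ h) (fun h : ↥W →ₗ[R] ↥X₀ => f ∘ₗ h)

/-- `𝒳` is coherent: `𝒞(𝒳) = rap 𝒳`. -/
def Coherent (𝒳 : Set (ModuleCat.{u} R)) : Prop :=
  ∀ M : ModuleCat.{u} R, Module.Finite R M → (MemCC R 𝒳 M ↔ HasRightApprox R 𝒳 M)

/-- The right Ext-orthogonal class `𝒳^⊥` of a class `𝒳` of finitely generated modules. -/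
def XPerp (𝒳 : Set (ModuleCat.{u} R)) : Set (ModuleCat.{u} R) :=
  {Y | Module.Finite R Y ∧ ∀ X ∈ 𝒳, ∀ i, 0 < i → ExtVanish R i X Y}

/-- The projective dimension of `M` is at most `n`. -/
def ProjDimLE (M : ModuleCat.{u} R) (n : ℕ) : Prop :=
  ∀ N : ModuleCat.{u} R, ∀ i, n < i → ExtVanish R i M N

/-- The depth of an `R`-module over a local ring: `inf { i | Ext^i(k, M) ≠ 0 }`. -/
def moduleDepth [IsLocalRing R] (M : ModuleCat.{u} R) : ℕ∞ :=
  sInf ((fun i : ℕ => (i : ℕ∞)) ''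
    {i : ℕ | ¬ ExtVanish R i (ModuleCat.of R (ResidueField R)) M})

/-- `M` is a maximal Cohen–Macaulay `R`-module: `depth M ≥ dim R`. -/
def IsMCM [IsLocalRing R] (M : ModuleCat.{u} R) : Prop :=
  ringKrullDim R ≤ (moduleDepth R M : WithBot ℕ∞)

/-- A Gorenstein local ring: `∃ n, Ext^i(M, R) = 0` for every finitely generated `M`
and every `i > n`. -/
def IsGorensteinLocalRing : Prop :=
  ∃ n : ℕ, ∀ M : ModuleCat.{u} R, Module.Finite R M →
    ∀ i, n < i → ExtVanish R i M (ModuleCat.of R R)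

/-- A regular local ring: Noetherian local with `dim R = dim_k 𝔪/𝔪²`. -/
def IsRegularLocal [IsLocalRing R] : Prop :=
  IsNoetherianRing R ∧
    ringKrullDim R = (Module.finrank (ResidueField R) (CotangentSpace R) : ℕ)

/-- Witness that the local ring `R` is a complete intersection: its `𝔪`-adic completion
is `Q/(f₁, …, f_c)` for a regular local ring `Q` and a `Q`-regular sequence `f₁, …, f_c`. -/
structure CompleteIntersectionWitness [IsLocalRing R] : Type (u + 1) where
  Q : Type u
  [commRing : CommRing Q]
  [localRing : IsLocalRing Q]
  regular : IsRegularLocal Q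
  fs : List Q
  regSeq : RingTheory.Sequence.IsRegular Q fs
  equiv : AdicCompletion (maximalIdeal R) R ≃+* Q ⧸ Ideal.span {x : Q | x ∈ fs}

/-- The local ring `R` is a complete intersection. -/
def IsCompleteIntersection [IsLocalRing R] : Prop :=
  Nonempty (CompleteIntersectionWitness R)

end

/-! Over a henselian local ring, an endomorphism `φ` of a finite module with `f ∘ φ = f` has a
Fitting decomposition whose non-invertible part is killed by `f`. Splitting such parts off turns
every right approximation into a right minimal one, whose kernel is a summand of the original one.

A right minimal approximation `α : X_A → A` has Wakamatsu's lifting property: if `α` extends along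
an inclusion of `X_A` with cokernel in `𝒳`, then that inclusion splits over `A`. For a short exact
sequence `0 → A → B → C → 0`, approximations of `A` and `C` always fit into an extension `E → B`;
if the one of `A` is right minimal, the splitting shows that `E → B` is an approximation. The
kernels then form a short exact sequence again, so the same argument approximates the kernel. -/

section Henselian

open Polynomial

variable {R : Type u} [CommRing R]

theorem exists_ofId_comp_eq_of_standardEtalePresentation [HenselianLocalRing R] {S : Type*}
    [CommRing S] [Algebra R S] (P : StandardEtalePresentation R S) (φ : S →ₐ[R] ResidueField R) :
    ∃ ψ : S →ₐ[R] R, (Algebra.ofId R (ResidueField R)).comp ψ = φ := by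
  have hφ := P.hasMap.map φ
  obtain ⟨a, ha_root, ha⟩ := ((HenselianLocalRing.TFAE R).out 0 1 rfl rfl).mp inferInstance
    P.f P.monic_f (φ P.x) hφ.1 hφ.isUnit_derivative_f.ne_zero
  have residue_eval (q : R[X]) : residue R (q.eval a) = aeval (φ P.x) q := by
    rw [← ha, aeval_def, ResidueField.algebraMap_eq, eval₂_at_apply]
  have ha_map : P.P.HasMap a := by
    refine ⟨by simpa using ha_root, ?_⟩
    rw [coe_aeval_eq_eval, ← isUnit_map_iff (residue R), residue_eval]
    exact hφ.2
  refine ⟨(P.lift a ha_map).comp P.equivRing.toAlgHom, P.hom_ext ?_⟩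
  simpa [Algebra.ofId_apply] using ha

theorem exists_ofId_comp_eq_of_etale [HenselianLocalRing R] {S : Type*} [CommRing S] [Algebra R S]
    [Algebra.Etale R S] (φ : S →ₐ[R] ResidueField R) :
    ∃ ψ : S →ₐ[R] R, (Algebra.ofId R (ResidueField R)).comp ψ = φ := by
  have : (RingHom.ker φ).IsPrime := RingHom.ker_isPrime φ
  obtain ⟨f, hf, hstd⟩ := Algebra.IsEtaleAt.exists_isStandardEtale (R := R) (RingHom.ker φ)
  have hφf : IsUnit (φ f) := isUnit_iff_ne_zero.mpr hf
  obtain ⟨ψ, hψ⟩ := exists_ofId_comp_eq_of_standardEtalePresentation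
    hstd.nonempty_standardEtalePresentation.some
    (IsLocalization.Away.liftAlgHom (S := Localization.Away f) f hφf)
  refine ⟨ψ.comp (IsScalarTower.toAlgHom R S _), ?_⟩
  rw [← AlgHom.comp_assoc, hψ]
  ext s
  simp

theorem exists_mul_eq_and_map_residue_eq [HenselianLocalRing R] {p : R[X]} (hp : p.Monic)
    {f g : (ResidueField R)[X]} (hf : f.Monic) (hg : g.Monic)
    (hfg : f * g = p.map (residue R)) (hcop : IsCoprime f g) :
    ∃ f' g' : R[X], f' * g' = p ∧ IsCoprime f' g' ∧
      f'.map (residue R) = f ∧ g'.map (residue R) = g := by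
  have hdeg : p.natDegree = f.natDegree + g.natDegree := by
    rw [← hf.natDegree_mul hg, hfg, hp.natDegree_map]
  let p' : MonicDegreeEq R p.natDegree := .mk p hp rfl
  let factorization (S : Type u) [CommRing S] [Algebra R S] :=
    UniversalCoprimeFactorizationRing.homEquiv S f.natDegree g.natDegree hdeg p'
  let q : {q : MonicDegreeEq (ResidueField R) f.natDegree ×
      MonicDegreeEq (ResidueField R) g.natDegree //
      q.1.1 * q.2.1 = p'.1.map (algebraMap R (ResidueField R)) ∧ IsCoprime q.1.1 q.2.1} :=
    ⟨(.mk f hf rfl, .mk g hg rfl), hfg, hcop⟩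
  obtain ⟨ψ, hψ⟩ := exists_ofId_comp_eq_of_etale ((factorization (ResidueField R)).symm q)
  have hq : factorization (ResidueField R) ((Algebra.ofId R _).comp ψ) = q := by
    rw [hψ, Equiv.apply_symm_apply]
  obtain ⟨hmul, hcop'⟩ := (factorization R ψ).2
  refine ⟨(factorization R ψ).1.1.1, (factorization R ψ).1.2.1, ?_, hcop', ?_, ?_⟩
  · simpa [p'] using hmul
  · have := UniversalCoprimeFactorizationRing.homEquiv_comp_fst R
      f.natDegree g.natDegree hdeg p' ψ (Algebra.ofId R (ResidueField R))
    exact congr($(this.symm.trans congr($hq.1.1)).1)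
  · have := UniversalCoprimeFactorizationRing.homEquiv_comp_snd R
      f.natDegree g.natDegree hdeg p' ψ (Algebra.ofId R (ResidueField R))
    exact congr($(this.symm.trans congr($hq.1.2)).1)

theorem isCoprime_X_of_isUnit_coeff_zero {q : R[X]} (hq : IsUnit (q.coeff 0)) : IsCoprime X q := by
  rw [← q.divX_mul_X_add, IsCoprime.mul_add_right_right_iff]
  exact isCoprime_one_right.of_isCoprime_of_dvd_right (hq.map C).dvd

theorem exists_mul_eq_and_map_residue_eq_X_pow [HenselianLocalRing R] {p : R[X]} (hp : p.Monic) :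
    ∃ (k : ℕ) (f g : R[X]), f * g = p ∧ IsCoprime f g ∧
      f.map (residue R) = X ^ k ∧ IsCoprime X g := by
  obtain ⟨q, hq, hXq⟩ := exists_eq_pow_rootMultiplicity_mul_and_not_dvd _
    (hp.map (residue R)).ne_zero 0
  rw [C_0, sub_zero] at hq hXq
  have hq_monic : q.Monic := (monic_X_pow _).of_mul_monic_left (hq ▸ hp.map (residue R))
  have hcop : IsCoprime (X ^ rootMultiplicity 0 (p.map (residue R))) q :=
    (irreducible_X.coprime_iff_not_dvd.mpr hXq).pow_left
  obtain ⟨f, g, hfg, hcop', hf, hg⟩ :=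
    exists_mul_eq_and_map_residue_eq hp (monic_X_pow _) hq_monic hq.symm hcop
  refine ⟨_, f, g, hfg, hcop', hf, ?_⟩
  apply isCoprime_X_of_isUnit_coeff_zero
  rwa [← isUnit_map_iff (residue R), ← coeff_map, hg, isUnit_iff_ne_zero, ne_eq, ← X_dvd_iff]

theorem isUnit_aeval_of_isCoprime {S : Type*} [Ring S] [Algebra R S] {x : S} {p q : R[X]}
    (hpq : IsCoprime p q) (hq : aeval x q = 0) : IsUnit (aeval x p) := by
  obtain ⟨a, b, hab⟩ := hpq
  have h_left : aeval x a * aeval x p = 1 := by simpa [hq] using congr(aeval x $hab)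
  have h_right : aeval x p * aeval x a = 1 := by rw [← h_left, ← map_mul, ← map_mul, mul_comm]
  exact isUnit_iff_exists.mpr ⟨_, h_right, h_left⟩

theorem comp_aeval_eq_eval_one_smul {X A : Type*} [AddCommGroup X] [Module R X] [AddCommGroup A]
    [Module R A] {f : X →ₗ[R] A} {φ : Module.End R X} (hφ : f ∘ₗ φ = f) (q : R[X]) :
    f ∘ₗ aeval φ q = q.eval 1 • f := by
  induction q using Polynomial.induction_on with
  | C a => ext; simp
  | add p q hp hq => rw [map_add, LinearMap.comp_add, hp, hq, eval_add, add_smul]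
  | monomial n a h =>
    rw [pow_succ, ← mul_assoc, mul_comm, map_mul, aeval_X, Module.End.mul_eq_comp,
      ← LinearMap.comp_assoc, hφ, h]
    simp

theorem exists_isIdempotentElem_comp_eq [HenselianLocalRing R] {X A : Type*} [AddCommGroup X]
    [Module R X] [Module.Finite R X] [AddCommGroup A] [Module R A] {f : X →ₗ[R] A}
    {φ : Module.End R X} (hφ : f ∘ₗ φ = f) :
    ∃ e : Module.End R X, IsIdempotentElem e ∧ f ∘ₗ e = f ∧ (e = 1 → IsUnit φ) := by
  obtain ⟨p, hp, hp_aeval⟩ : ∃ p : R[X], p.Monic ∧ aeval φ p = 0 :=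
    Algebra.IsIntegral.isIntegral (R := R) φ
  obtain ⟨k, q, r, hqr, ⟨a, b, hab⟩, hq, hr⟩ := exists_mul_eq_and_map_residue_eq_X_pow hp
  have hsum : aeval φ (a * q) + aeval φ (b * r) = 1 := by rw [← map_add, hab, map_one]
  have hprod (c : R[X]) : aeval φ (c * (q * r)) = 0 := by rw [hqr, map_mul, hp_aeval, mul_zero]
  have hq_one : IsUnit (q.eval 1) := by
    rw [← isUnit_map_iff (residue R), ← eval_map_apply, hq]
    simp
  have hr_smul : r.eval 1 • f = 0 := by
    rw [← hq_one.smul_eq_zero, smul_smul, ← eval_mul, hqr, ← comp_aeval_eq_eval_one_smul hφ,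
      hp_aeval, LinearMap.comp_zero]
  -- The projection onto the part of `X` on which `φ` is invertible.
  refine ⟨aeval φ (a * q), ?_, ?_, fun he => ?_⟩
  · refine (IsIdempotentElem.of_mul_add ?_ hsum).1
    rw [← map_mul, mul_mul_mul_comm, hprod]
  · rw [eq_sub_of_add_eq hsum, LinearMap.comp_sub, comp_aeval_eq_eval_one_smul hφ, eval_mul,
      mul_smul, hr_smul, smul_zero, sub_zero, Module.End.one_eq_id, LinearMap.comp_id]
  · have hr_aeval : aeval φ r = 0 := by
      rw [← one_mul (aeval φ r), ← he, ← map_mul, mul_assoc, hprod]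
    simpa using isUnit_aeval_of_isCoprime hr hr_aeval

end Henselian

section RightMinimal

open TensorProduct

variable {R X A : Type*} [CommRing R] [AddCommGroup X] [Module R X] [AddCommGroup A] [Module R A]

/-- A linear map `f : X → A` is right minimal if every endomorphism of `X` over `A` is bijective;
the approximations with this property are the ones that extend along short exact sequences. -/
def IsRightMinimal (f : X →ₗ[R] A) : Prop :=
  ∀ φ : X →ₗ[R] X, f ∘ₗ φ = f → Function.Bijective φ

theorem finrank_residueField_tensorProduct_range_lt [IsLocalRing R] [Module.Finite R X]
    {e : Module.End R X} (he : IsIdempotentElem e) (he_ne : e ≠ 1) :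
    Module.finrank (ResidueField R) (ResidueField R ⊗[R] LinearMap.range e) <
      Module.finrank (ResidueField R) (ResidueField R ⊗[R] X) := by
  have hcompl := LinearMap.IsIdempotentElem.isCompl he
  let k := ResidueField R
  let split : k ⊗[R] X ≃ₗ[k] (k ⊗[R] LinearMap.range e) × (k ⊗[R] LinearMap.ker e) :=
    ((Submodule.prodEquivOfIsCompl _ _ hcompl).symm.baseChange R k _ _).trans
      (TensorProduct.prodRight R k k _ _)
  have : Module.Finite R (LinearMap.ker e) :=
    .of_surjective _ (Submodule.projectionOnto_surjective hcompl.symm)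
  have : Nontrivial (k ⊗[R] LinearMap.ker e) := by
    rw [← not_subsingleton_iff_nontrivial, IsLocalRing.subsingleton_tensorProduct,
      Submodule.subsingleton_iff_eq_bot, LinearMap.ker_eq_bot]
    exact fun hinj => he_ne (LinearMap.ext fun x => hinj congr($he.eq x))
  rw [split.finrank_eq, Module.finrank_prod, Nat.lt_add_right_iff_pos]
  exact Module.finrank_pos

theorem rangeRestrict_comp_subtype_range {e : Module.End R X} (he : IsIdempotentElem e) :
    e.rangeRestrict ∘ₗ (LinearMap.range e).subtype = .id := by
  ext ⟨_, x, rfl⟩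
  exact congr($he.eq x)

theorem exists_isRightMinimal_comp_subtype_range [HenselianLocalRing R] [Module.Finite R X]
    (f : X →ₗ[R] A) :
    ∃ e : Module.End R X, IsIdempotentElem e ∧ f ∘ₗ e = f ∧
      IsRightMinimal (f ∘ₗ (LinearMap.range e).subtype) := by
  let rank (e : Module.End R X) : ℕ :=
    Module.finrank (ResidueField R) (ResidueField R ⊗[R] LinearMap.range e)
  obtain ⟨e, ⟨he, hfe⟩, hmin⟩ := exists_minimalFor_of_wellFoundedLT
    (fun e : Module.End R X => IsIdempotentElem e ∧ f ∘ₗ e = f) rank ⟨1, .one, f.comp_id⟩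
  refine ⟨e, he, hfe, fun φ hφ => ?_⟩
  obtain ⟨d, hd, hfd, hd_unit⟩ := exists_isIdempotentElem_comp_eq hφ
  by_contra hφ_bij
  have hd_ne : d ≠ 1 := fun h => hφ_bij ((Module.End.isUnit_iff φ).mp (hd_unit h))
  let ι := (LinearMap.range e).subtype
  let π := e.rangeRestrict
  have hπι : π ∘ₗ ι = .id := rangeRestrict_comp_subtype_range he
  let c : Module.End R X := ι ∘ₗ d ∘ₗ π
  have hc : IsIdempotentElem c := calc
    ι ∘ₗ d ∘ₗ (π ∘ₗ ι) ∘ₗ d ∘ₗ π = ι ∘ₗ (d * d) ∘ₗ π := by rw [hπι]; rfl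
    _ = c := by rw [hd.eq]
  have hfc : f ∘ₗ c = f := calc
    ((f ∘ₗ ι) ∘ₗ d) ∘ₗ π = f ∘ₗ e := by rw [hfd]; rfl
    _ = f := hfe
  have hrange : LinearMap.range c = (LinearMap.range d).map ι := by
    rw [LinearMap.range_comp, LinearMap.range_comp_of_range_eq_top _ e.range_rangeRestrict]
  have hrank : rank c = Module.finrank (ResidueField R) (ResidueField R ⊗[R] LinearMap.range d) :=
    (((Submodule.equivMapOfInjective ι Subtype.val_injective _).trans
      (.ofEq _ _ hrange.symm)).baseChange R (ResidueField R) _ _).finrank_eq.symm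
  have : Module.Finite R (LinearMap.range e) := .range e
  have hlt : rank c < rank e := hrank ▸ finrank_residueField_tensorProduct_range_lt hd hd_ne
  exact hlt.not_ge (hmin ⟨hc, hfc⟩ hlt.le)

end RightMinimal

section ShortExact

variable {R : Type u} [CommRing R] {A B C W : ModuleCat.{u} R}

theorem isSES_inl_snd (A C : ModuleCat.{u} R) :
    IsSES R (B := .of R (A × C)) (LinearMap.inl R A C) (LinearMap.snd R A C) :=
  ⟨LinearMap.inl_injective, .inl_snd, LinearMap.snd_surjective⟩

theorem isSES_subtype_ker {p : B →ₗ[R] C} (hp : Function.Surjective p) :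
    IsSES R (A := .of R (LinearMap.ker p)) (LinearMap.ker p).subtype p :=
  ⟨Subtype.val_injective, p.exact_subtype_ker_map, hp⟩

theorem exists_moduleCat_pushout (i : A →ₗ[R] B) (κ : A →ₗ[R] W) :
    ∃ (E : ModuleCat.{u} R) (j : W →ₗ[R] E) (t : B →ₗ[R] E),
      (∀ y b, j y = t b ↔ ∃ x, κ x = y ∧ i x = b) ∧ (∀ e, ∃ y b, j y + t b = e) ∧
      ∀ {D : ModuleCat.{u} R} (u : W →ₗ[R] D) (v : B →ₗ[R] D), u ∘ₗ κ = v ∘ₗ i →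
        ∃! w : E →ₗ[R] D, w ∘ₗ j = u ∧ w ∘ₗ t = v := by
  let K : Submodule R (W × B) := LinearMap.range (κ.prod (-i))
  let j : W →ₗ[R] (W × B) ⧸ K := K.mkQ ∘ₗ LinearMap.inl R W B
  let t : B →ₗ[R] (W × B) ⧸ K := K.mkQ ∘ₗ LinearMap.inr R W B
  refine ⟨.of R _, j, t, fun y b => ?_, fun e => ?_, fun {D} u v huv => ?_⟩
  · rw [LinearMap.comp_apply, LinearMap.comp_apply, ← sub_eq_zero, ← map_sub, Submodule.mkQ_apply,
      Submodule.Quotient.mk_eq_zero]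
    simp [K]
  · obtain ⟨⟨y, b⟩, rfl⟩ := K.mkQ_surjective e
    refine ⟨y, b, ?_⟩
    rw [LinearMap.comp_apply, LinearMap.comp_apply, ← map_add]
    simp
  · have hK : K ≤ LinearMap.ker (u.coprod v) := by
      rintro _ ⟨x, rfl⟩
      simpa [← sub_eq_add_neg, sub_eq_zero] using congr($huv x)
    refine ⟨K.liftQ (u.coprod v) hK, ⟨?_, ?_⟩, fun w hw => ?_⟩
    · ext; simp [j]
    · ext; simp [t]
    · ext x
      · simpa [j] using congr($(hw.1) x)
      · simpa [t] using congr($(hw.2) x)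

namespace IsSES

variable {i : A →ₗ[R] B} {p : B →ₗ[R] C}

theorem comp_eq_zero (h : IsSES R i p) : p ∘ₗ i = 0 :=
  h.2.1.linearMap_comp_eq_zero

theorem exists_comp_eq (h : IsSES R i p) {m : W →ₗ[R] B} (hm : p ∘ₗ m = 0) :
    ∃ m' : W →ₗ[R] A, i ∘ₗ m' = m :=
  ⟨m.codRestrictOfInjective i h.1 fun w => (h.2.1 (m w)).mp congr($hm w),
    LinearMap.codRestrictOfInjective_comp ..⟩

theorem exists_eq_comp (h : IsSES R i p) {m : B →ₗ[R] W} (hm : m ∘ₗ i = 0) :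
    ∃ m' : C →ₗ[R] W, m' ∘ₗ p = m :=
  (LinearMap.exact_lcomp_of_exact_of_surjective W h.2.1 h.2.2 m).mp hm

theorem exists_pullback (h : IsSES R i p) (θ : W →ₗ[R] C) :
    ∃ (V : ModuleCat.{u} R) (a : A →ₗ[R] V) (b : V →ₗ[R] W) (c : V →ₗ[R] B),
      IsSES R a b ∧ c ∘ₗ a = i ∧ p ∘ₗ c = θ ∘ₗ b := by
  let V : Submodule R (B × W) :=
    LinearMap.eqLocus (p ∘ₗ LinearMap.fst R B W) (θ ∘ₗ LinearMap.snd R B W)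
  have hV (v : V) : p v.1.1 = θ v.1.2 := v.2
  let a : A →ₗ[R] V := (LinearMap.inl R B W ∘ₗ i).codRestrict V fun x => by
    simp [V, h.2.1.apply_apply_eq_zero]
  refine ⟨.of R V, a, LinearMap.snd R B W ∘ₗ V.subtype, LinearMap.fst R B W ∘ₗ V.subtype,
    ⟨?_, ?_, ?_⟩, rfl, LinearMap.ext hV⟩
  · exact fun x y hxy => h.1 congr(($hxy).1.1)
  · rintro ⟨⟨b, w⟩, hbw⟩
    constructor
    · rintro (rfl : w = 0)
      obtain ⟨x, rfl⟩ := (h.2.1 b).mp (by simpa using hV ⟨_, hbw⟩)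
      exact ⟨x, rfl⟩
    · rintro ⟨x, hx⟩
      exact congr(($hx).1.2).symm
  · intro w
    obtain ⟨b, hb⟩ := h.2.2 (θ w)
    exact ⟨⟨(b, w), hb⟩, rfl⟩

theorem exists_pushout (h : IsSES R i p) (κ : A →ₗ[R] W) :
    ∃ (E : ModuleCat.{u} R) (j : W →ₗ[R] E) (q : E →ₗ[R] C) (t : B →ₗ[R] E),
      IsSES R j q ∧ q ∘ₗ t = p ∧
      ∀ {D : ModuleCat.{u} R} (u : W →ₗ[R] D) (v : B →ₗ[R] D), u ∘ₗ κ = v ∘ₗ i →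
        ∃! w : E →ₗ[R] D, w ∘ₗ j = u ∧ w ∘ₗ t = v := by
  obtain ⟨E, j, t, heq, hadd, desc⟩ := exists_moduleCat_pushout i κ
  obtain ⟨q, ⟨hqj, hqt⟩, -⟩ := desc 0 p (by rw [LinearMap.zero_comp, h.comp_eq_zero])
  refine ⟨E, j, q, t, ⟨?_, ?_, .of_comp (g := t) ?_⟩, hqt, desc⟩
  · rw [injective_iff_map_eq_zero]
    intro y hy
    obtain ⟨x, rfl, hx⟩ := (heq y 0).mp (by rw [hy, map_zero])
    rw [(map_eq_zero_iff i h.1).mp hx, map_zero]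
  · refine LinearMap.exact_of_comp_eq_zero_of_ker_le_range hqj fun e he => ?_
    obtain ⟨y, b, rfl⟩ := hadd e
    have hb : p b = 0 := by rw [← hqt, ← he, map_add, ← LinearMap.comp_apply q j, hqj]; simp
    obtain ⟨x, rfl⟩ := (h.2.1 b).mp hb
    exact ⟨y + κ x, by rw [map_add, (heq (κ x) (i x)).mpr ⟨x, rfl, rfl⟩]⟩
  · rw [← LinearMap.coe_comp, hqt]
    exact h.2.2

theorem exists_ker_of_comp_eq {A' B' C' : ModuleCat.{u} R} {i' : A' →ₗ[R] B'} {p' : B' →ₗ[R] C'}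
    {α : A →ₗ[R] A'} {β : B →ₗ[R] B'} {γ : C →ₗ[R] C'} (h : IsSES R i p) (h' : IsSES R i' p')
    (hi : β ∘ₗ i = i' ∘ₗ α) (hp : p' ∘ₗ β = γ ∘ₗ p) (hα : Function.Surjective α) :
    ∃ (j : LinearMap.ker α →ₗ[R] LinearMap.ker β) (q : LinearMap.ker β →ₗ[R] LinearMap.ker γ),
      IsSES R (A := .of R (LinearMap.ker α)) (B := .of R (LinearMap.ker β))
        (C := .of R (LinearMap.ker γ)) j q := by
  have hi_apply (x : A) : β (i x) = i' (α x) := congr($hi x)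
  have hp_apply (y : B) : p' (β y) = γ (p y) := congr($hp y)
  refine ⟨i.restrict fun x hx => ?_, p.restrict fun y hy => ?_, ?_, ?_, ?_⟩
  · rw [LinearMap.mem_ker, hi_apply, hx, map_zero]
  · rw [LinearMap.mem_ker, ← hp_apply, hy, map_zero]
  · exact fun x y hxy => Subtype.ext (h.1 congr(($hxy).1))
  · rintro ⟨y, hy⟩
    constructor
    · intro hpy
      obtain ⟨x, rfl⟩ := (h.2.1 y).mp congr(($hpy).1)
      rw [LinearMap.mem_ker, hi_apply, map_eq_zero_iff i' h'.1] at hy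
      exact ⟨⟨x, hy⟩, rfl⟩
    · rintro ⟨x, hx⟩
      rw [← hx]
      exact Subtype.ext (h.2.1.apply_apply_eq_zero x.1)
  · rintro ⟨z, hz⟩
    obtain ⟨y, rfl⟩ := h.2.2 z
    rw [LinearMap.mem_ker, ← hp_apply] at hz
    obtain ⟨a, ha⟩ := (h'.2.1 _).mp hz
    obtain ⟨x, rfl⟩ := hα a
    refine ⟨⟨y - i x, ?_⟩, Subtype.ext ?_⟩
    · rw [LinearMap.mem_ker, map_sub, hi_apply, ha, sub_self]
    · simp [h.2.1.apply_apply_eq_zero x]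

end IsSES

end ShortExact

section Approximation

variable {R : Type u} [CommRing R] {𝒳 : Set (ModuleCat.{u} R)} {A B C M N X : ModuleCat.{u} R}

namespace IsResolving

theorem prod_mem (h𝒳 : IsResolving R 𝒳) (hA : A ∈ 𝒳) (hC : C ∈ 𝒳) : .of R (A × C) ∈ 𝒳 :=
  h𝒳.extClosed _ _ _ _ _ (isSES_inl_snd A C) hA hC

theorem mem_of_retract (h𝒳 : IsResolving R 𝒳) (hX : X ∈ 𝒳) {s : A →ₗ[R] X} {p : X →ₗ[R] A}
    (hps : p ∘ₗ s = .id) : A ∈ 𝒳 :=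
  let split : X ≃ₗ[R] LinearMap.ker p × A :=
    (p.exact_subtype_ker_map.splitSurjectiveEquiv Subtype.val_injective ⟨s, hps⟩).1
  h𝒳.summandClosed A (.of R (LinearMap.ker p)) (h𝒳.isoClosed hX (split.trans (.prodComm R _ _)))

theorem exists_isSES_free (h𝒳 : IsResolving R 𝒳) (hX : X ∈ 𝒳) :
    ∃ (Ω F : ModuleCat.{u} R) (ι : Ω →ₗ[R] F) (π : F →ₗ[R] X),
      IsSES R ι π ∧ Ω ∈ 𝒳 ∧ Module.Free R F := by
  have := h𝒳.finite X hX
  obtain ⟨n, π, hπ⟩ := Module.Finite.exists_fin' R X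
  let F : ModuleCat.{u} R := .of R (Fin n → R)
  have hF_free : Module.Free R F := Module.Free.pi ..
  have hF : F ∈ 𝒳 := h𝒳.freeMem F Module.Finite.pi hF_free
  have hses := isSES_subtype_ker (B := F) hπ
  exact ⟨_, F, _, π, hses, h𝒳.kerClosed _ _ _ _ _ hses hF hX, hF_free⟩

end IsResolving

theorem IsRightApprox.surjective {α : X →ₗ[R] A} (hα : IsRightApprox R 𝒳 α)
    (h𝒳 : IsResolving R 𝒳) : Function.Surjective α := by
  intro a
  obtain ⟨l, hl⟩ := hα.2 (.of R R)
    (h𝒳.freeMem (.of R R) inferInstance inferInstance)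
    (LinearMap.toSpanSingleton R A a)
  exact ⟨l 1, by simpa using congr($hl 1)⟩

namespace HasRightApprox

theorem of_mem (hA : A ∈ 𝒳) : HasRightApprox R 𝒳 A :=
  ⟨A, .id, hA, fun _ _ g => ⟨g, g.id_comp⟩⟩

theorem prod (h𝒳 : IsResolving R 𝒳) :
    HasRightApprox R 𝒳 A → HasRightApprox R 𝒳 C → HasRightApprox R 𝒳 (.of R (A × C)) := by
  rintro ⟨X, α, hX, hα⟩ ⟨Y, γ, hY, hγ⟩
  refine ⟨.of R (X × Y), α.prodMap γ, h𝒳.prod_mem hX hY, fun W hW g => ?_⟩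
  obtain ⟨l, hl⟩ := hα W hW (LinearMap.fst R A C ∘ₗ g)
  obtain ⟨m, hm⟩ := hγ W hW (LinearMap.snd R A C ∘ₗ g)
  exact ⟨l.prod m, LinearMap.ext fun w => Prod.ext congr($hl w) congr($hm w)⟩

theorem of_retract (hB : HasRightApprox R 𝒳 B) {s : A →ₗ[R] B} {p : B →ₗ[R] A}
    (hps : p ∘ₗ s = .id) : HasRightApprox R 𝒳 A := by
  obtain ⟨X, α, hX, hα⟩ := hB
  refine ⟨X, p ∘ₗ α, hX, fun W hW g => ?_⟩
  obtain ⟨l, hl⟩ := hα W hW (s ∘ₗ g)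
  exact ⟨l, by rw [LinearMap.comp_assoc, hl, ← LinearMap.comp_assoc, hps, g.id_comp]⟩

end HasRightApprox

theorem memCC_iff_exists_isRightApprox : MemCC R 𝒳 M ↔
    ∃ (X : ModuleCat.{u} R) (α : X →ₗ[R] M),
      IsRightApprox R 𝒳 α ∧ HasRightApprox R 𝒳 (.of R (LinearMap.ker α)) := by
  constructor
  · rintro ⟨X₀, X₁, g, f, hX₀, hX₁, hfg⟩
    have hg (x : X₁) : f (g x) = 0 := congr($(((hfg X₁ hX₁).2 g).mpr ⟨.id, g.comp_id⟩) x)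
    refine ⟨X₀, f, ⟨hX₀, fun W hW => (hfg W hW).1⟩, X₁, g.codRestrict _ hg, hX₁, fun W hW l => ?_⟩
    obtain ⟨m, hm⟩ := ((hfg W hW).2 ((LinearMap.ker f).subtype ∘ₗ l)).mp
      (LinearMap.ext fun w => (l w).2)
    exact ⟨m, LinearMap.ext fun w => Subtype.ext congr($hm w)⟩
  · rintro ⟨X₀, f, ⟨hX₀, hf⟩, X₁, g, hX₁, hg⟩
    refine ⟨X₀, X₁, (LinearMap.ker f).subtype ∘ₗ g, f, hX₀, hX₁, fun W hW => ⟨hf W hW, fun l => ?_⟩⟩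
    constructor
    · intro hl
      obtain ⟨m, hm⟩ := hg W hW (l.codRestrict _ fun w => congr($hl w))
      exact ⟨m, LinearMap.ext fun w => congr(($hm w).1)⟩
    · rintro ⟨m, rfl⟩
      exact LinearMap.ext fun w => (g (m w)).2

theorem MemCC.of_retract (h𝒳 : IsResolving R 𝒳) (hM : MemCC R 𝒳 M) {s : N →ₗ[R] M}
    {p : M →ₗ[R] N} (hps : p ∘ₗ s = .id) : MemCC R 𝒳 N := by
  obtain ⟨X, α, ⟨hX, hα⟩, hker⟩ := memCC_iff_exists_isRightApprox.mp hM
  refine memCC_iff_exists_isRightApprox.mpr ⟨X, p ∘ₗ α, ⟨hX, fun W hW g => ?_⟩, ?_⟩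
  · obtain ⟨l, hl⟩ := hα W hW (s ∘ₗ g)
    exact ⟨l, by rw [LinearMap.comp_assoc, hl, ← LinearMap.comp_assoc, hps, g.id_comp]⟩
  -- With `e` lifting `(1 - s p) α` through `α`, the kernel of `p ∘ α` is a retract of `X × ker α`.
  obtain ⟨e, he⟩ := hα X hX (α - s ∘ₗ p ∘ₗ α)
  have hps_apply (y : N) : p (s y) = y := congr($hps y)
  have he_apply (x : X) : α (e x) = α x - s (p (α x)) := congr($he x)
  let r : X × LinearMap.ker α →ₗ[R] LinearMap.ker (p ∘ₗ α) :=
    (e.coprod (LinearMap.ker α).subtype).codRestrict _ fun x => by simp [he_apply, hps_apply]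
  let d : LinearMap.ker (p ∘ₗ α) →ₗ[R] LinearMap.ker α :=
    ((.id - e) ∘ₗ (LinearMap.ker (p ∘ₗ α)).subtype).codRestrict _ fun z => by
      have hz : p (α z.1) = 0 := z.2
      simp [he_apply, hz]
  refine ((HasRightApprox.of_mem hX).prod h𝒳 hker).of_retract
    (s := (LinearMap.ker (p ∘ₗ α)).subtype.prod d) (p := r) ?_
  exact LinearMap.ext fun z => Subtype.ext (add_sub_cancel (e z.1) z.1)

theorem IsRightMinimal.exists_retraction {V W : ModuleCat.{u} R} {α : X →ₗ[R] A}
    (hmin : IsRightMinimal α) (h𝒳 : IsResolving R 𝒳) (hα : IsRightApprox R 𝒳 α)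
    {a : X →ₗ[R] V} {b : V →ₗ[R] W} (h : IsSES R a b) (hW : W ∈ 𝒳) {m : V →ₗ[R] A}
    (hma : m ∘ₗ a = α) : ∃ r : V →ₗ[R] X, r ∘ₗ a = .id ∧ α ∘ₗ r = m := by
  obtain ⟨μ, hμ⟩ := hα.2 V (h𝒳.extClosed _ _ _ _ _ h hα.1 hW) m
  have hφ : α ∘ₗ (μ ∘ₗ a) = α := by rw [← LinearMap.comp_assoc, hμ, hma]
  let φ : X ≃ₗ[R] X := .ofBijective (μ ∘ₗ a) (hmin _ hφ)
  have hφ_symm : α ∘ₗ φ.symm.toLinearMap = α := by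
    rw [LinearEquiv.comp_toLinearMap_symm_eq]
    exact hφ.symm
  exact ⟨φ.symm.toLinearMap ∘ₗ μ, LinearMap.ext fun x => φ.symm_apply_apply x,
    by rw [← LinearMap.comp_assoc, hφ_symm, hμ]⟩

namespace IsSES

variable {XA XC E : ModuleCat.{u} R} {i : A →ₗ[R] B} {p : B →ₗ[R] C} {α : XA →ₗ[R] A}

theorem exists_lift (h : IsSES R i p) (h𝒳 : IsResolving R 𝒳) (hα : IsRightApprox R 𝒳 α)
    (hXC : XC ∈ 𝒳) (γ : XC →ₗ[R] C) :
    ∃ (E : ModuleCat.{u} R) (j : XA →ₗ[R] E) (q : E →ₗ[R] XC) (ε : E →ₗ[R] B),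
      IsSES R j q ∧ ε ∘ₗ j = i ∘ₗ α ∧ p ∘ₗ ε = γ ∘ₗ q := by
  obtain ⟨Ω, F, ι, π, hΩF, hΩ, _⟩ := h𝒳.exists_isSES_free hXC
  obtain ⟨l, hl⟩ := Module.projective_lifting_property p (γ ∘ₗ π) h.2.2
  obtain ⟨lΩ, hlΩ⟩ := h.exists_comp_eq (m := l ∘ₗ ι) <| by
    rw [← LinearMap.comp_assoc, hl, LinearMap.comp_assoc, hΩF.comp_eq_zero, γ.comp_zero]
  obtain ⟨κ, rfl⟩ := hα.2 Ω hΩ lΩ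
  obtain ⟨E, j, q, t, hjq, hqt, desc⟩ := hΩF.exists_pushout κ
  obtain ⟨ε, ⟨hεj, hεt⟩, -⟩ := desc (i ∘ₗ α) l hlΩ
  refine ⟨E, j, q, ε, hjq, hεj, (desc 0 (γ ∘ₗ π) ?_).unique ⟨?_, ?_⟩ ⟨?_, ?_⟩⟩
  · rw [LinearMap.zero_comp, LinearMap.comp_assoc, hΩF.comp_eq_zero, γ.comp_zero]
  · rw [LinearMap.comp_assoc, hεj, ← LinearMap.comp_assoc, h.comp_eq_zero, LinearMap.zero_comp]
  · rw [LinearMap.comp_assoc, hεt, hl]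
  · rw [LinearMap.comp_assoc, hjq.comp_eq_zero, γ.comp_zero]
  · rw [LinearMap.comp_assoc, hqt]

variable {γ : XC →ₗ[R] C}

theorem isRightApprox_of_isRightMinimal {j : XA →ₗ[R] E} {q : E →ₗ[R] XC} {ε : E →ₗ[R] B}
    (h : IsSES R i p) (h𝒳 : IsResolving R 𝒳) (hα : IsRightApprox R 𝒳 α) (hmin : IsRightMinimal α)
    (hγ : IsRightApprox R 𝒳 γ) (hjq : IsSES R j q) (hεj : ε ∘ₗ j = i ∘ₗ α)
    (hpε : p ∘ₗ ε = γ ∘ₗ q) : IsRightApprox R 𝒳 ε := by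
  refine ⟨h𝒳.extClosed _ _ _ _ _ hjq hα.1 hγ.1, fun W hW g => ?_⟩
  obtain ⟨θ, hθ⟩ := hγ.2 W hW (p ∘ₗ g)
  obtain ⟨V, a, b, c, hab, hca, hqc⟩ := hjq.exists_pullback θ
  -- The obstruction to `c` descending to a lift of `g` takes values in `A`.
  obtain ⟨m, hm⟩ := h.exists_comp_eq (m := ε ∘ₗ c - g ∘ₗ b) <| by
    rw [LinearMap.comp_sub, ← LinearMap.comp_assoc, hpε, LinearMap.comp_assoc, hqc,
      ← LinearMap.comp_assoc, hθ, LinearMap.comp_assoc, sub_self]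
  have hma : m ∘ₗ a = α := by
    rw [← LinearMap.cancel_left h.1, ← LinearMap.comp_assoc, hm, LinearMap.sub_comp,
      LinearMap.comp_assoc, hca, LinearMap.comp_assoc, hab.comp_eq_zero, LinearMap.comp_zero,
      sub_zero, hεj]
  obtain ⟨r, hra, hαr⟩ := hmin.exists_retraction h𝒳 hα hab hW hma
  obtain ⟨k, hk⟩ := hab.exists_eq_comp (m := c - j ∘ₗ r) <| by
    rw [LinearMap.sub_comp, hca, LinearMap.comp_assoc, hra, LinearMap.comp_id, sub_self]
  refine ⟨k, ?_⟩
  rw [← LinearMap.cancel_right hab.2.2, LinearMap.comp_assoc, hk, LinearMap.comp_sub,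
    ← LinearMap.comp_assoc, hεj, LinearMap.comp_assoc, hαr, hm, sub_sub_cancel]

theorem exists_isRightApprox (h : IsSES R i p) (h𝒳 : IsResolving R 𝒳)
    (hα : IsRightApprox R 𝒳 α) (hmin : IsRightMinimal α) (hγ : IsRightApprox R 𝒳 γ) :
    ∃ (E : ModuleCat.{u} R) (ε : E →ₗ[R] B), IsRightApprox R 𝒳 ε ∧
      ∃ (j : LinearMap.ker α →ₗ[R] LinearMap.ker ε) (q : LinearMap.ker ε →ₗ[R] LinearMap.ker γ),
        IsSES R (A := .of R (LinearMap.ker α)) (B := .of R (LinearMap.ker ε))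
          (C := .of R (LinearMap.ker γ)) j q := by
  obtain ⟨E, j, q, ε, hjq, hεj, hpε⟩ := h.exists_lift h𝒳 hα hγ.1 γ
  exact ⟨E, ε, h.isRightApprox_of_isRightMinimal h𝒳 hα hmin hγ hjq hεj hpε,
    hjq.exists_ker_of_comp_eq h hεj hpε (hα.surjective h𝒳)⟩

end IsSES

variable [HenselianLocalRing R] {i : A →ₗ[R] B} {p : B →ₗ[R] C}

theorem IsRightApprox.exists_isRightMinimal (h𝒳 : IsResolving R 𝒳) {α : X →ₗ[R] A}
    (hα : IsRightApprox R 𝒳 α) :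
    ∃ (Z : ModuleCat.{u} R) (ρ : Z →ₗ[R] A), IsRightApprox R 𝒳 ρ ∧ IsRightMinimal ρ ∧
      (HasRightApprox R 𝒳 (.of R (LinearMap.ker α)) →
        HasRightApprox R 𝒳 (.of R (LinearMap.ker ρ))) := by
  have := h𝒳.finite X hα.1
  obtain ⟨e, he, hαe, hmin⟩ := exists_isRightMinimal_comp_subtype_range α
  let s := (LinearMap.range e).subtype
  let p := e.rangeRestrict
  have hps : p ∘ₗ s = .id := rangeRestrict_comp_subtype_range he
  refine ⟨.of R (LinearMap.range e), α ∘ₗ s, ⟨h𝒳.mem_of_retract hα.1 hps, fun W hW g => ?_⟩,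
    hmin, fun hker => ?_⟩
  · obtain ⟨l, rfl⟩ := hα.2 W hW g
    exact ⟨p ∘ₗ l, congr($hαe ∘ₗ l)⟩
  · refine hker.of_retract
      (s := s.restrict (p := LinearMap.ker (α ∘ₗ s)) fun z hz => hz)
      (p := p.restrict (q := LinearMap.ker (α ∘ₗ s)) fun x hx => ?_) ?_
    · exact congr($hαe x).trans hx
    · exact LinearMap.ext fun z => Subtype.ext congr($hps z)

theorem HasRightApprox.of_isSES (h𝒳 : IsResolving R 𝒳) (h : IsSES R i p)
    (hA : HasRightApprox R 𝒳 A) (hC : HasRightApprox R 𝒳 C) : HasRightApprox R 𝒳 B := by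
  obtain ⟨_, _, hA⟩ := hA
  obtain ⟨_, _, hα, hmin, -⟩ := hA.exists_isRightMinimal h𝒳
  obtain ⟨_, _, hγ⟩ := hC
  obtain ⟨E, ε, hε, -⟩ := h.exists_isRightApprox h𝒳 hα hmin hγ
  exact ⟨E, ε, hε⟩

theorem MemCC.of_isSES (h𝒳 : IsResolving R 𝒳) (h : IsSES R i p) (hA : MemCC R 𝒳 A)
    (hC : MemCC R 𝒳 C) : MemCC R 𝒳 B := by
  rw [memCC_iff_exists_isRightApprox] at hA hC ⊢
  obtain ⟨_, _, hA, hkerA⟩ := hA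
  obtain ⟨_, _, hα, hmin, hkerα⟩ := hA.exists_isRightMinimal h𝒳
  obtain ⟨_, _, hγ, hkerγ⟩ := hC
  obtain ⟨E, ε, hε, j, q, hjq⟩ := h.exists_isRightApprox h𝒳 hα hmin hγ
  exact ⟨E, ε, hε, .of_isSES h𝒳 hjq (hkerα hkerA) hkerγ⟩

end Approximation

theorem stmt11_general (R : Type u) [CommRing R] [HenselianLocalRing R]
    (𝒳 : Set (ModuleCat.{u} R)) (h𝒳 : IsResolving R 𝒳) :
    (∀ M N : ModuleCat.{u} R,
      MemCC R 𝒳 (ModuleCat.of R (↥M × ↥N)) → MemCC R 𝒳 M ∧ MemCC R 𝒳 N) ∧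
    (∀ (A B C : ModuleCat.{u} R) (f : ↥A →ₗ[R] ↥B) (g : ↥B →ₗ[R] ↥C),
      IsSES R f g → MemCC R 𝒳 A → MemCC R 𝒳 C → MemCC R 𝒳 B) :=
  ⟨fun M N hMN => ⟨hMN.of_retract h𝒳 (LinearMap.fst_comp_inl R M N),
    hMN.of_retract h𝒳 (LinearMap.snd_comp_inr R M N)⟩,
    fun _ _ _ _ _ => .of_isSES h𝒳⟩

/-- Over a henselian Gorenstein local ring, the class `𝒞(𝒳)` is closed
under direct summands and under extensions. -/
theorem stmt11 (R : Type u) [CommRing R] [IsNoetherianRing R] [IsLocalRing R]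
    [HenselianLocalRing R] (hG : IsGorensteinLocalRing R)
    (𝒳 : Set (ModuleCat.{u} R)) (h𝒳 : IsResolving R 𝒳) :
    (∀ M N : ModuleCat.{u} R, Module.Finite R M → Module.Finite R N →
      MemCC R 𝒳 (ModuleCat.of R (↥M × ↥N)) → MemCC R 𝒳 M ∧ MemCC R 𝒳 N) ∧
    (∀ (A B C : ModuleCat.{u} R), Module.Finite R A → Module.Finite R B →
      Module.Finite R C → ∀ (f : ↥A →ₗ[R] ↥B) (g : ↥B →ₗ[R] ↥C),
      IsSES R f g → MemCC R 𝒳 A → MemCC R 𝒳 C → MemCC R 𝒳 B) := by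
  obtain ⟨h_prod, h_ext⟩ := stmt11_general R 𝒳 h𝒳
  exact ⟨fun M N _ _ => h_prod M N, fun A B C _ _ _ => h_ext A B C⟩
end

section
/- Let R be a henselian Gorenstein Noetherian local ring and 𝒳 a resolving subcategory of the category of finitely generated R-modules. If 𝒳^⊥ is closed under syzygies (i.e. 𝒳^⊥ contains all finitely generated free R-modules, and for every Y ∈ 𝒳^⊥ and every surjection F → Y with F finitely generated free, the kernel belongs to 𝒳^⊥), then every module in 𝒳^⊥ admits a right 𝒳-approximation. -/
open CategoryTheory IsLocalRing

universe u

/-! A surjection `f : F → Y` from a finitely generated free module is itself a right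
`𝒳`-approximation: since `ker f ∈ 𝒳^⊥`, exactness of `Hom(W, F) → Hom(W, Y) → Ext¹(W, ker f) = 0`
lets every map `W → Y` with `W ∈ 𝒳` factor through `f`. -/

section ExtComparison

variable {R C : Type*} [Ring R] [Category* C] [Abelian C] [Linear R C] {X : C}

theorem isZero_ext_succ_iff_forall_cocycle [EnoughProjectives C] (P : ProjectiveResolution X)
    (Y : C) (n : ℕ) :
    Limits.IsZero (((Ext R C (n + 1)).obj (Opposite.op X)).obj Y) ↔
      ∀ b : P.complex.X (n + 1) ⟶ Y, P.complex.d (n + 2) (n + 1) ≫ b = 0 →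
        ∃ c : P.complex.X n ⟶ Y, P.complex.d (n + 1) n ≫ c = b := by
  rw [(P.isoExt (R := R) (n + 1) Y).isZero_iff, ← HomologicalComplex.exactAt_iff_isZero_homology,
    HomologicalComplex.exactAt_iff' _ n (n + 1) (n + 2) (by simp) (by simp),
    ShortComplex.moduleCat_exact_iff]
  rfl

theorem subsingleton_abelianExt_succ_iff_forall_cocycle [HasExt C] (P : ProjectiveResolution X)
    (Y : C) (n : ℕ) :
    Subsingleton (Abelian.Ext X Y (n + 1)) ↔
      ∀ b : P.complex.X (n + 1) ⟶ Y, P.complex.d (n + 2) (n + 1) ≫ b = 0 →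
        ∃ c : P.complex.X n ⟶ Y, P.complex.d (n + 1) n ≫ c = b := by
  refine ⟨fun _ b hb => (P.extMk_eq_zero_iff b (n + 2) rfl hb n rfl).1 (Subsingleton.elim _ _),
    fun h => subsingleton_of_forall_eq 0 fun α => ?_⟩
  obtain ⟨b, hb, rfl⟩ := P.extMk_surjective α (n + 2) rfl
  exact (P.extMk_eq_zero_iff b (n + 2) rfl hb n rfl).2 (h b hb)

-- The covariant long exact sequence is available for `Abelian.Ext` only, not for the derived
-- functors `Ext R C n`.
theorem isZero_ext_succ_iff_subsingleton_abelianExt [EnoughProjectives C] [HasExt C]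
    (X Y : C) (n : ℕ) :
    Limits.IsZero (((Ext R C (n + 1)).obj (Opposite.op X)).obj Y) ↔
      Subsingleton (Abelian.Ext X Y (n + 1)) :=
  (isZero_ext_succ_iff_forall_cocycle (ProjectiveResolution.of X) Y n).trans
    (subsingleton_abelianExt_succ_iff_forall_cocycle _ Y n).symm

end ExtComparison

theorem exists_comp_eq_of_subsingleton_abelianExt_one {C : Type*} [Category* C] [Abelian C]
    [HasExt C] {S : ShortComplex C} (hS : S.ShortExact) {W : C}
    [Subsingleton (Abelian.Ext W S.X₁ 1)] (g : W ⟶ S.X₃) : ∃ k : W ⟶ S.X₂, k ≫ S.g = g := by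
  obtain ⟨x, hx⟩ := Abelian.Ext.covariant_sequence_exact₃ W hS (Abelian.Ext.mk₀ g) (zero_add 1)
    (Subsingleton.elim _ _)
  obtain ⟨k, rfl⟩ := (Abelian.Ext.mk₀_bijective W S.X₂).surjective x
  rw [Abelian.Ext.mk₀_comp_mk₀] at hx
  exact ⟨k, (Abelian.Ext.mk₀_bijective W S.X₃).injective hx⟩

section RightApprox

variable {R : Type u} [CommRing R]

theorem extVanish_succ_iff_subsingleton_abelianExt (M N : ModuleCat.{u} R) (n : ℕ) :
    ExtVanish R (n + 1) M N ↔ Subsingleton (Abelian.Ext M N (n + 1)) :=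
  ModuleCat.isZero_iff_subsingleton.symm.trans (isZero_ext_succ_iff_subsingleton_abelianExt M N n)

theorem isRightApprox_of_surjective {𝒳 : Set (ModuleCat.{u} R)} {X M : ModuleCat.{u} R}
    (hX : X ∈ 𝒳) {f : X →ₗ[R] M} (hf : Function.Surjective f)
    (hker : ∀ W ∈ 𝒳, ExtVanish R 1 W (ModuleCat.of R (LinearMap.ker f))) :
    IsRightApprox R 𝒳 f := by
  refine ⟨hX, fun W hW g => ?_⟩
  have : Subsingleton (Abelian.Ext W f.shortComplexKer.X₁ 1) :=
    (extVanish_succ_iff_subsingleton_abelianExt W _ 0).1 (hker W hW)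
  obtain ⟨k, hk⟩ := exists_comp_eq_of_subsingleton_abelianExt_one
    (LinearMap.shortExact_shortComplexKer hf) (ModuleCat.ofHom g)
  exact ⟨k.hom, congrArg ModuleCat.Hom.hom hk⟩

end RightApprox

theorem stmt15_general (R : Type u) [CommRing R] (𝒳 : Set (ModuleCat.{u} R))
    (hfree : ∀ F : ModuleCat.{u} R, Module.Finite R F → Module.Free R F → F ∈ 𝒳)
    (hsyz : ∀ Y ∈ XPerp R 𝒳, ∀ (F : ModuleCat.{u} R) (f : ↥F →ₗ[R] ↥Y),
      Module.Finite R F → Module.Free R F → Function.Surjective f →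
        ModuleCat.of R ↥(LinearMap.ker f) ∈ XPerp R 𝒳) :
    ∀ Y ∈ XPerp R 𝒳, HasRightApprox R 𝒳 Y := by
  intro Y hY
  have : Module.Finite R Y := hY.1
  obtain ⟨n, f, hf⟩ := Module.Finite.exists_fin' R Y
  let F : ModuleCat.{u} R := ModuleCat.of R (Fin n → R)
  have hFfin : Module.Finite R F := Module.Finite.pi
  have hFfree : Module.Free R F := Module.Free.function (Fin n) R R
  have hker : ModuleCat.of R (LinearMap.ker f) ∈ XPerp R 𝒳 := hsyz Y hY F f hFfin hFfree hf
  exact ⟨F, f, isRightApprox_of_surjective (hfree F hFfin hFfree) hf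
    fun W hW => hker.2 W hW 1 one_pos⟩

/-- Over a henselian Gorenstein local ring, if `𝒳^⊥` is closed under
syzygies, then every module in `𝒳^⊥` admits a right `𝒳`-approximation. -/
theorem stmt15 (R : Type u) [CommRing R] [IsNoetherianRing R] [IsLocalRing R]
    [HenselianLocalRing R] (hG : IsGorensteinLocalRing R)
    (𝒳 : Set (ModuleCat.{u} R)) (h𝒳 : IsResolving R 𝒳)
    (hfree : ∀ F : ModuleCat.{u} R, Module.Finite R F → Module.Free R F → F ∈ XPerp R 𝒳)
    (hsyz : ∀ Y ∈ XPerp R 𝒳, ∀ (F : ModuleCat.{u} R) (f : ↥F →ₗ[R] ↥Y),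
      Module.Finite R F → Module.Free R F → Function.Surjective f →
        ModuleCat.of R ↥(LinearMap.ker f) ∈ XPerp R 𝒳) :
    ∀ Y ∈ XPerp R 𝒳, HasRightApprox R 𝒳 Y := by
  exact stmt15_general R 𝒳 h𝒳.freeMem hsyz
end

section
/- Let R be a henselian Gorenstein Noetherian local ring and 𝒳 a resolving subcategory of the category of finitely generated R-modules. If 𝒳 is contravariantly finite or contravariantly infinite, then 𝒳 is coherent. -/
open CategoryTheory IsLocalRing

universe u

/-! For any class `𝒳`, `M` lies in `𝒞(𝒳)` exactly when it has a right `𝒳`-approximation whose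
kernel has one too. If `𝒳` is contravariantly finite, the kernel of any approximation is finitely
generated and so can be approximated; if `𝒳` is contravariantly infinite, a module with an
approximation already lies in `𝒳`, and its identity is an approximation with zero kernel. -/

theorem exact_postcomp_ker_subtype_iff_surjective {R W X Y M : Type*} [Semiring R]
    [AddCommMonoid W] [Module R W] [AddCommMonoid X] [Module R X]
    [AddCommMonoid Y] [Module R Y] [AddCommMonoid M] [Module R M]
    (f : X →ₗ[R] M) (p : Y →ₗ[R] LinearMap.ker f) :
    Function.Exact (fun h : W →ₗ[R] Y => ((LinearMap.ker f).subtype ∘ₗ p) ∘ₗ h)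
        (fun h : W →ₗ[R] X => f ∘ₗ h) ↔
      Function.Surjective (fun h : W →ₗ[R] Y => p ∘ₗ h) := by
  constructor
  · intro hexact k
    have hk : f ∘ₗ ((LinearMap.ker f).subtype ∘ₗ k) = 0 := by
      rw [← LinearMap.comp_assoc, LinearMap.comp_ker_subtype, LinearMap.zero_comp]
    obtain ⟨h, hh⟩ := (hexact _).1 hk
    exact ⟨h, LinearMap.ext fun w => Subtype.ext (LinearMap.congr_fun hh w)⟩
  · intro hsurj k
    constructor
    · intro hk
      obtain ⟨h, hh⟩ := hsurj (k.codRestrict (LinearMap.ker f) (LinearMap.congr_fun hk))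
      exact ⟨h, LinearMap.ext fun w => congrArg Subtype.val (LinearMap.congr_fun hh w)⟩
    · rintro ⟨h, rfl⟩
      exact LinearMap.ext fun w => (p (h w)).2

section Approximations

variable {R : Type u} [CommRing R] {𝒳 : Set (ModuleCat.{u} R)} {M : ModuleCat.{u} R}

theorem memCC_iff_exists_isRightApprox_hasRightApprox_ker :
    MemCC R 𝒳 M ↔ ∃ (X : ModuleCat.{u} R) (f : X →ₗ[R] M),
      IsRightApprox R 𝒳 f ∧ HasRightApprox R 𝒳 (ModuleCat.of R (LinearMap.ker f)) := by
  constructor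
  · rintro ⟨X₀, X₁, g, f, hX₀, hX₁, hpres⟩
    have hfg : f ∘ₗ g = 0 := ((hpres X₁ hX₁).2 g).2 ⟨LinearMap.id, g.comp_id⟩
    exact ⟨X₀, f, ⟨hX₀, fun W hW => (hpres W hW).1⟩,
      X₁, g.codRestrict (LinearMap.ker f) (LinearMap.congr_fun hfg), hX₁,
      fun W hW => (exact_postcomp_ker_subtype_iff_surjective f _).1 (hpres W hW).2⟩
  · rintro ⟨X, f, ⟨hX, hf⟩, Y, p, hY, hp⟩
    exact ⟨X, Y, (LinearMap.ker f).subtype ∘ₗ p, f, hX, hY,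
      fun W hW => ⟨hf W hW, (exact_postcomp_ker_subtype_iff_surjective f p).2 (hp W hW)⟩⟩

theorem MemCC.hasRightApprox (hM : MemCC R 𝒳 M) : HasRightApprox R 𝒳 M :=
  let ⟨X, f, hf, _⟩ := memCC_iff_exists_isRightApprox_hasRightApprox_ker.1 hM
  ⟨X, f, hf⟩

theorem isRightApprox_id (hM : M ∈ 𝒳) : IsRightApprox R 𝒳 (LinearMap.id : M →ₗ[R] M) :=
  ⟨hM, fun _ _ g => ⟨g, g.id_comp⟩⟩

theorem hasRightApprox_of_subsingleton [Subsingleton M] (h𝒳 : 𝒳.Nonempty) :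
    HasRightApprox R 𝒳 M :=
  let ⟨X, hX⟩ := h𝒳
  ⟨X, 0, hX, fun _ _ _ => ⟨0, Subsingleton.elim _ _⟩⟩

theorem memCC_of_mem (hM : M ∈ 𝒳) : MemCC R 𝒳 M := by
  have : Subsingleton (LinearMap.ker (LinearMap.id : M →ₗ[R] M)) := by
    rw [LinearMap.ker_id]
    infer_instance
  exact memCC_iff_exists_isRightApprox_hasRightApprox_ker.2
    ⟨M, LinearMap.id, isRightApprox_id hM, hasRightApprox_of_subsingleton ⟨M, hM⟩⟩

theorem ContravariantlyFinite.coherent [IsNoetherianRing R]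
    (hfin : ∀ X ∈ 𝒳, Module.Finite R X) (h : ContravariantlyFinite R 𝒳) : Coherent R 𝒳 := by
  refine fun M _ => ⟨MemCC.hasRightApprox, fun ⟨X, f, hf⟩ => ?_⟩
  have : Module.Finite R X := hfin X hf.1
  exact memCC_iff_exists_isRightApprox_hasRightApprox_ker.2
    ⟨X, f, hf, h (ModuleCat.of R (LinearMap.ker f)) inferInstance⟩

theorem ContravariantlyInfinite.coherent (h : ContravariantlyInfinite R 𝒳) : Coherent R 𝒳 := by
  refine fun M hM => ⟨MemCC.hasRightApprox, fun happrox => memCC_of_mem ?_⟩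
  by_contra hM𝒳
  exact h M hM hM𝒳 happrox

end Approximations

theorem stmt16_general (R : Type u) [CommRing R] [IsNoetherianRing R]
    (𝒳 : Set (ModuleCat.{u} R)) (hfin : ∀ X ∈ 𝒳, Module.Finite R X)
    (h : ContravariantlyFinite R 𝒳 ∨ ContravariantlyInfinite R 𝒳) :
    Coherent R 𝒳 :=
  h.elim (·.coherent hfin) (·.coherent)

/-- Over a henselian Gorenstein local ring, a resolving subcategory that
is contravariantly finite or contravariantly infinite is coherent. -/
theorem stmt16 (R : Type u) [CommRing R] [IsNoetherianRing R] [IsLocalRing R]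
    [HenselianLocalRing R] (hG : IsGorensteinLocalRing R)
    (𝒳 : Set (ModuleCat.{u} R)) (h𝒳 : IsResolving R 𝒳)
    (h : ContravariantlyFinite R 𝒳 ∨ ContravariantlyInfinite R 𝒳) :
    Coherent R 𝒳 :=
  stmt16_general R 𝒳 h𝒳.finite h
end
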